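/- arXiv:1705.01815 — 2 statements merged into one kernel-verified Lean document; each statement's English description precedes it below -/
import Mathlib

section
/- Let G = G(Γ, 𝔭) be a graph product of cyclic groups, g ∈ G, and let a, b₁, b₂, b₃, b₄ ∈ Γ be five distinct vertices such that a is not adjacent to any of b₁, b₂, b₃, b₄ and {b₁, b₂, b₃, b₄} ∩ sp(g) = ∅. Then for every n ≥ 2 the element g·a⁻¹b₁⁻¹b₂·a·b₃⁻¹b₄ has no n-th root in G. -/
def graphProdRels {V : Type} (Γ : SimpleGraph V) (𝔭 : V → ℕ) : Set (FreeGroup V) :=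
  {w | (∃ v, 𝔭 v ≠ 0 ∧ w = FreeGroup.of v ^ 𝔭 v) ∨
       (∃ a b, Γ.Adj a b ∧
         w = FreeGroup.of a * FreeGroup.of b * (FreeGroup.of a)⁻¹ * (FreeGroup.of b)⁻¹)}

def GraphProduct {V : Type} (Γ : SimpleGraph V) (𝔭 : V → ℕ) : Type :=
  PresentedGroup (graphProdRels Γ 𝔭)

instance {V : Type} (Γ : SimpleGraph V) (𝔭 : V → ℕ) : Group (GraphProduct Γ 𝔭) := by
  unfold GraphProduct; infer_instance

def GraphProduct.of {V : Type} {Γ : SimpleGraph V} {𝔭 : V → ℕ} (v : V) : GraphProduct Γ 𝔭 :=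
  PresentedGroup.of v

/-- The support of an element of a graph product: the smallest set of vertices `A` such that
`g` lies in the subgroup generated by the generators from `A`. -/
def GraphProduct.sp {V : Type} {Γ : SimpleGraph V} {𝔭 : V → ℕ} (g : GraphProduct Γ 𝔭) : Set V :=
  {v | ∀ A : Set V, g ∈ Subgroup.closure (GraphProduct.of '' A) → v ∈ A}

namespace Monoid.CoprodI

section Roots

variable {ι : Type*} {G : ι → Type*} [∀ i, Group (G i)]

/-- The list `L` is a nonempty reduced word whose first letter lies in `G i` and whose last letter
lies in `G j`. -/
structure IsReducedFromTo (i j : ι) (L : List (Σ i, G i)) : Prop where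
  ne_one : ∀ l ∈ L, l.2 ≠ 1
  chain_ne : L.IsChain fun l l' => l.1 ≠ l'.1
  head : L.head?.map Sigma.fst = some i
  last : L.getLast?.map Sigma.fst = some j

/-- The element of the free product spelled by a list of letters. -/
def listProd (L : List (Σ i, G i)) : CoprodI G := (L.map fun l => of l.2).prod

@[simp]
theorem listProd_nil : listProd ([] : List (Σ i, G i)) = 1 := rfl

@[simp]
theorem listProd_cons (l : Σ i, G i) (L : List (Σ i, G i)) :
    listProd (l :: L) = of l.2 * listProd L := by
  simp [listProd]

@[simp]
theorem listProd_append (L M : List (Σ i, G i)) :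
    listProd (L ++ M) = listProd L * listProd M := by
  simp [listProd]

theorem listProd_flatten_replicate (n : ℕ) (L : List (Σ i, G i)) :
    listProd (List.replicate n L).flatten = listProd L ^ n := by
  induction n with
  | zero => simp
  | succ n ih => simp [List.replicate_succ, ih, pow_succ']

theorem IsReducedFromTo.ne_nil {i j : ι} {L : List (Σ i, G i)} (h : IsReducedFromTo i j L) :
    L ≠ [] := by
  rintro rfl
  simpa using h.head

theorem IsReducedFromTo.singleton {i : ι} {x : G i} (hx : x ≠ 1) :
    IsReducedFromTo i i [(⟨i, x⟩ : Σ i, G i)] :=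
  ⟨by simpa using hx, by simp, by simp, by simp⟩

theorem IsReducedFromTo.append {i j k l : ι} {L M : List (Σ i, G i)}
    (hL : IsReducedFromTo i j L) (hM : IsReducedFromTo k l M) (hjk : j ≠ k) :
    IsReducedFromTo i l (L ++ M) := by
  refine ⟨?_, ?_, ?_, ?_⟩
  · intro x hx
    rcases List.mem_append.1 hx with hx | hx
    exacts [hL.ne_one x hx, hM.ne_one x hx]
  · refine List.isChain_append.2 ⟨hL.chain_ne, hM.chain_ne, ?_⟩
    intro x hx y hy
    have h1 := hL.last
    have h2 := hM.head
    rw [Option.mem_def] at hx hy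
    rw [hx] at h1
    rw [hy] at h2
    simp only [Option.map_some, Option.some.injEq] at h1 h2
    rwa [h1, h2]
  · rw [List.head?_append_of_ne_nil _ hL.ne_nil]
    exact hL.head
  · rw [List.getLast?_append_of_ne_nil _ hM.ne_nil]
    exact hM.last

theorem IsReducedFromTo.flatten_replicate {i j : ι} {L : List (Σ i, G i)}
    (hL : IsReducedFromTo i j L) (hij : i ≠ j) {n : ℕ} (hn : n ≠ 0) :
    IsReducedFromTo i j (List.replicate n L).flatten := by
  induction n with
  | zero => exact absurd rfl hn
  | succ n ih =>
    rcases eq_or_ne n 0 with rfl | h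
    · simpa using hL
    · rw [List.replicate_succ, List.flatten_cons]
      exact hL.append (ih h) hij.symm

theorem IsReducedFromTo.two_le_length {i j : ι} {L : List (Σ i, G i)}
    (hL : IsReducedFromTo i j L) (hij : i ≠ j) : 2 ≤ L.length := by
  rcases L with _ | ⟨a, _ | ⟨b, L⟩⟩
  · exact absurd rfl hL.ne_nil
  · have h1 := hL.head
    have h2 := hL.last
    simp only [List.head?_cons, List.getLast?_singleton, Option.map_some, Option.some.injEq]
      at h1 h2
    exact absurd (h1.symm.trans h2) hij
  · simp

/-- Normal form theorem: distinct reduced words spell distinct elements. -/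
theorem IsReducedFromTo.eq_of_listProd_eq {i j k l : ι} {L M : List (Σ i, G i)}
    (hL : IsReducedFromTo i j L) (hM : IsReducedFromTo k l M) (h : listProd L = listProd M) :
    L = M := by
  classical
  have := Word.equiv.symm.injective
    (a₁ := (⟨L, hL.ne_one, hL.chain_ne⟩ : Word G)) (a₂ := ⟨M, hM.ne_one, hM.chain_ne⟩) h
  exact congrArg Word.toList this

theorem IsReducedFromTo.listProd_ne_one {i j : ι} {L : List (Σ i, G i)}
    (hL : IsReducedFromTo i j L) : listProd L ≠ 1 := by
  classical
  intro h
  have := Word.equiv.symm.injective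
    (a₁ := (⟨L, hL.ne_one, hL.chain_ne⟩ : Word G)) (a₂ := Word.empty) h
  exact hL.ne_nil (congrArg Word.toList this)

theorem eq_one_or_exists_isReducedFromTo (x : CoprodI G) :
    x = 1 ∨ ∃ i j L, IsReducedFromTo i j L ∧ listProd L = x := by
  classical
  obtain ⟨⟨L, h1, h2⟩, rfl⟩ := (Word.equiv (M := G)).symm.surjective x
  rcases L.eq_nil_or_concat with rfl | ⟨L', b, rfl⟩
  · exact Or.inl rfl
  · refine Or.inr ⟨((L' ++ [b]).head (by simp)).1, b.1, L' ++ [b],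
      ⟨by simpa using h1, by simpa using h2, ?_, by simp⟩, ?_⟩
    · rw [List.head?_eq_some_head (by simp)]
      rfl
    · simp [Word.equiv, Word.prod, listProd]

/-- A reduced word with both ends in `G i` is a single letter, or consists of two letters of `G i`
around a reduced word whose ends lie in other factors. -/
theorem IsReducedFromTo.exists_eq_cons_append {i : ι} {L : List (Σ i, G i)}
    (hL : IsReducedFromTo i i L) :
    (∃ s : G i, s ≠ 1 ∧ L = [⟨i, s⟩]) ∨
      ∃ (s t : G i) (k l : ι) (M : List (Σ i, G i)), s ≠ 1 ∧ t ≠ 1 ∧ i ≠ k ∧ l ≠ i ∧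
        IsReducedFromTo k l M ∧ L = ⟨i, s⟩ :: M ++ [⟨i, t⟩] := by
  obtain ⟨h1, h2, h3, h4⟩ := hL
  rcases L with _ | ⟨⟨i', s⟩, L⟩
  · simp at h3
  obtain rfl : i' = i := by simpa using h3
  rcases L.eq_nil_or_concat with rfl | ⟨M, ⟨i'', t⟩, rfl⟩
  · exact Or.inl ⟨s, h1 ⟨_, s⟩ (by simp), rfl⟩
  obtain rfl : i'' = i' := by
    rw [List.concat_eq_append, ← List.cons_append, List.getLast?_concat] at h4
    simpa using h4
  simp only [List.concat_eq_append] at h1 h2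
  right
  rcases M.eq_nil_or_concat with rfl | ⟨M', b, hb⟩
  · simp at h2
  have hM : M ≠ [] := by simp [hb]
  have h2' := List.isChain_append.1 (List.isChain_cons.1 h2).2
  refine ⟨s, t, (M.head hM).1, (M.getLast hM).1, M, h1 ⟨_, s⟩ (by simp), h1 ⟨_, t⟩ (by simp),
    ?_, ?_, ⟨fun l hl => h1 l (by simp [hl]), h2'.1, ?_, ?_⟩, by simp⟩
  · refine (List.isChain_cons.1 h2).1 (M.head hM) ?_
    rw [List.head?_append_of_ne_nil _ hM, List.head?_eq_some_head hM]
    rfl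
  · exact h2'.2.2 (M.getLast hM) (by simp [List.getLast?_eq_some_getLast hM]) ⟨_, t⟩ (by simp)
  · simp [List.head?_eq_some_head hM]
  · simp [List.getLast?_eq_some_getLast hM]

/-- A power of an element whose reduced word has both ends in `G i` is trivial or again has a
reduced word with both ends in `G i`. -/
theorem IsReducedFromTo.pow_eq_one_or {i : ι} {L : List (Σ i, G i)}
    (hL : IsReducedFromTo i i L) (n : ℕ) :
    listProd L ^ n = 1 ∨ ∃ M, IsReducedFromTo i i M ∧ listProd M = listProd L ^ n := by
  rcases Nat.eq_zero_or_pos n with rfl | hn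
  · simp
  induction hN : L.length using Nat.strong_induction_on generalizing i L with
  | _ N ih =>
  rcases hL.exists_eq_cons_append with
    ⟨s, hs, rfl⟩ | ⟨s, t, k, l, M, hs, ht, hk, hl, hM, rfl⟩
  · by_cases h : s ^ n = 1
    · left
      simp [← map_pow, h]
    · exact Or.inr ⟨_, .singleton h, by simp⟩
  by_cases hst : t * s = 1
  · obtain rfl : t = s⁻¹ := eq_inv_of_mul_eq_one_left hst
    have hpow : listProd ((⟨i, s⟩ : Σ i, G i) :: M ++ [⟨i, s⁻¹⟩]) ^ n
        = of s * listProd M ^ n * of s⁻¹ := by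
      simp [← mul_assoc, conj_pow]
    have key : listProd M ^ n = 1 ∨
        ∃ P, IsReducedFromTo k l P ∧ listProd P = listProd M ^ n := by
      by_cases hkl : k = l
      · subst hkl
        exact ih M.length (by simp [← hN]) hM rfl
      · exact Or.inr ⟨_, hM.flatten_replicate hkl hn.ne', listProd_flatten_replicate n M⟩
    rw [hpow]
    rcases key with h | ⟨P, hP, h⟩
    · left
      simp [h]
    · refine Or.inr ⟨_, ((IsReducedFromTo.singleton hs).append hP hk).append (.singleton ht) hl, ?_⟩
      simp [h, mul_assoc]
  · right
    obtain ⟨m, rfl⟩ : ∃ m, n = m + 1 := ⟨n - 1, by omega⟩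
    rcases eq_or_ne m 0 with rfl | hm
    · exact ⟨_, hL, by simp⟩
    have hMts := hM.append (.singleton hst) hl
    refine ⟨_, (((IsReducedFromTo.singleton hs).append (hMts.flatten_replicate hk.symm hm)
      hk).append hM hk).append (.singleton ht) hl, ?_⟩
    have hconj : ∀ a b c : CoprodI G, a * (b * (c * a)) ^ m * b * c = (a * b * c) ^ (m + 1) := by
      intro a b c
      have : b * (c * a) = a⁻¹ * (a * b * c) * a⁻¹⁻¹ := by group
      rw [this, conj_pow, pow_succ]
      group
    simpa [listProd_flatten_replicate, mul_assoc] using hconj (of s) (listProd M) (of t)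

/-- A root of an element whose reduced word has its ends in distinct factors is itself spelled by
such a word, which repeats to give the word of the power. -/
theorem IsReducedFromTo.exists_root {i j : ι} {L : List (Σ i, G i)} (hL : IsReducedFromTo i j L)
    (hij : i ≠ j) {n : ℕ} (hn : n ≠ 0) {x : CoprodI G} (hx : x ^ n = listProd L) :
    ∃ M, 2 ≤ M.length ∧ L = (List.replicate n M).flatten := by
  rcases eq_one_or_exists_isReducedFromTo x with rfl | ⟨k, l, M, hM, rfl⟩
  · exact absurd (by simpa using hx.symm) hL.listProd_ne_one
  rcases eq_or_ne k l with rfl | hkl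
  · rcases hM.pow_eq_one_or n with h | ⟨P, hP, h⟩
    · exact absurd (hx.symm.trans h) hL.listProd_ne_one
    · obtain rfl := hP.eq_of_listProd_eq hL (h.trans hx)
      exact absurd (Option.some.inj (hL.head.symm.trans hP.head) |>.trans
        (Option.some.inj (hP.last.symm.trans hL.last))) hij
  · refine ⟨M, hM.two_le_length hkl, hL.eq_of_listProd_eq (hM.flatten_replicate hkl hn) ?_⟩
    rw [listProd_flatten_replicate, hx]

theorem pow_ne_of_mul_of {i j : ι} (hij : i ≠ j) {u : G i} {h : G j} (hu : u ≠ 1) (hh : h ≠ 1)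
    {n : ℕ} (hn : 2 ≤ n) (x : CoprodI G) : x ^ n ≠ of u * of h := by
  intro hx
  obtain ⟨M, hM, h⟩ := ((IsReducedFromTo.singleton hu).append (.singleton hh) hij).exists_root hij
    (n := n) (by omega) (x := x) (by simpa using hx)
  have := congrArg List.length h
  simp only [List.cons_append, List.nil_append, List.length_cons, List.length_nil,
    List.length_flatten, List.map_replicate, List.sum_replicate, smul_eq_mul] at this
  nlinarith

theorem pow_ne_of_mul_of_mul_of_mul_of {i j : ι} (hij : i ≠ j) {u v : G i} {h k : G j}
    (hu : u ≠ 1) (hh : h ≠ 1) (hv : v ≠ 1) (hk : k ≠ 1) (hhk : h ≠ k)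
    {n : ℕ} (hn : 2 ≤ n) (x : CoprodI G) : x ^ n ≠ of u * of h * of v * of k := by
  intro hx
  obtain ⟨M, hM, h⟩ := ((((IsReducedFromTo.singleton hu).append (.singleton hh) hij).append
    (.singleton hv) hij.symm).append (.singleton hk) hij).exists_root hij
    (n := n) (by omega) (x := x) (by simpa [mul_assoc] using hx)
  have hlen := congrArg List.length h
  simp only [List.cons_append, List.nil_append, List.length_cons, List.length_nil,
    List.length_flatten, List.map_replicate, List.sum_replicate, smul_eq_mul] at hlen
  obtain rfl : n = 2 := by nlinarith
  obtain ⟨p, q, rfl⟩ := List.length_eq_two.1 (show M.length = 2 by omega)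
  simp [List.replicate_succ] at h
  exact hhk (by grind)

end Roots

end Monoid.CoprodI

namespace GraphProduct

variable {V : Type} {Γ : SimpleGraph V} {𝔭 : V → ℕ} {H : Type*} [Group H]

/-- The homomorphism out of a graph product given by compatible images of the generators. -/
def lift (f : V → H) (hpow : ∀ v, f v ^ 𝔭 v = 1) (hcomm : ∀ v w, Γ.Adj v w → Commute (f v) (f w)) :
    GraphProduct Γ 𝔭 →* H :=
  PresentedGroup.toGroup (f := f) (rels := graphProdRels Γ 𝔭) <| by
    rintro r (⟨v, -, rfl⟩ | ⟨v, w, h, rfl⟩)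
    · simpa using hpow v
    · simpa [commutatorElement_def] using commutatorElement_eq_one_iff_commute.2 (hcomm v w h)

@[simp]
theorem lift_of (f : V → H) (hpow : ∀ v, f v ^ 𝔭 v = 1)
    (hcomm : ∀ v w, Γ.Adj v w → Commute (f v) (f w)) (v : V) :
    lift f hpow hcomm (GraphProduct.of v) = f v :=
  PresentedGroup.toGroup.of _

theorem of_pow (v : V) : (GraphProduct.of v : GraphProduct Γ 𝔭) ^ 𝔭 v = 1 := by
  by_cases h : 𝔭 v = 0
  · simp [h]
  · exact PresentedGroup.one_of_mem (rels := graphProdRels Γ 𝔭) (Or.inl ⟨v, h, rfl⟩)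

theorem commute_of {v w : V} (h : Γ.Adj v w) :
    Commute (GraphProduct.of v : GraphProduct Γ 𝔭) (GraphProduct.of w) := by
  refine commutatorElement_eq_one_iff_commute.1 ?_
  exact PresentedGroup.one_of_mem (rels := graphProdRels Γ 𝔭) (Or.inr ⟨v, w, h, rfl⟩)

theorem closure_range_of :
    Subgroup.closure (Set.range (GraphProduct.of : V → GraphProduct Γ 𝔭)) = ⊤ :=
  PresentedGroup.closure_range_of _

open Classical in
/-- The retraction of a graph product that kills the vertex `b` and fixes all other vertices. -/
noncomputable def kill (b : V) : GraphProduct Γ 𝔭 →* GraphProduct Γ 𝔭 :=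
  lift (fun v => if v = b then 1 else GraphProduct.of v)
    (fun v => by split_ifs <;> simp [of_pow])
    (fun v w h => by split_ifs <;> simp [commute_of h])

theorem kill_of_self (b : V) : kill b (GraphProduct.of b : GraphProduct Γ 𝔭) = 1 := by
  simp [kill]

theorem kill_of_ne {b v : V} (h : v ≠ b) :
    kill b (GraphProduct.of v : GraphProduct Γ 𝔭) = GraphProduct.of v := by
  simp [kill, h]

theorem kill_eq_self {b : V} {g : GraphProduct Γ 𝔭} (hb : b ∉ sp g) : kill b g = g := by
  simp only [sp, Set.mem_ofPred_eq, not_forall] at hb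
  obtain ⟨A, hg, hA⟩ := hb
  have : Set.EqOn (kill b) (MonoidHom.id (GraphProduct Γ 𝔭)) (GraphProduct.of '' A) := by
    rintro _ ⟨v, hv, rfl⟩
    exact kill_of_ne (fun h => hA (h ▸ hv))
  exact MonoidHom.eqOn_closure this hg

theorem map_mem_of_notMem_sp (φ : GraphProduct Γ 𝔭 →* H) (S : Subgroup H) {b c : V}
    (hφ : ∀ v, v ≠ b → v ≠ c → φ (GraphProduct.of v) ∈ S) {g : GraphProduct Γ 𝔭}
    (hb : b ∉ sp g) (hc : c ∉ sp g) : φ g ∈ S := by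
  have hle : Subgroup.closure (Set.range GraphProduct.of) ≤
      S.comap (φ.comp ((kill b).comp (kill c))) := by
    rw [Subgroup.closure_le]
    rintro _ ⟨v, rfl⟩
    simp only [SetLike.mem_coe, Subgroup.mem_comap, MonoidHom.comp_apply]
    by_cases hvc : v = c
    · simp [hvc, kill_of_self]
    by_cases hvb : v = b
    · simp [hvb, kill_of_self, kill_of_ne (hvb ▸ hvc)]
    · simpa [kill_of_ne hvc, kill_of_ne hvb] using hφ v hvb hvc
  have hg : φ (kill b (kill c g)) ∈ S :=
    hle (closure_range_of (Γ := Γ) (𝔭 := 𝔭) ▸ Subgroup.mem_top g)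
  simpa [kill_eq_self hb, kill_eq_self hc] using hg

end GraphProduct

theorem stmt_5 {V : Type} (Γ : SimpleGraph V) (𝔭 : V → ℕ)
    (h𝔭 : ∀ v, 𝔭 v = 0 ∨ IsPrimePow (𝔭 v))
    (g : GraphProduct Γ 𝔭) (a b₁ b₂ b₃ b₄ : V)
    (hdist : [a, b₁, b₂, b₃, b₄].Nodup)
    (hadj : ¬ Γ.Adj a b₁ ∧ ¬ Γ.Adj a b₂ ∧ ¬ Γ.Adj a b₃ ∧ ¬ Γ.Adj a b₄)
    (hsp : b₁ ∉ GraphProduct.sp g ∧ b₂ ∉ GraphProduct.sp g ∧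
           b₃ ∉ GraphProduct.sp g ∧ b₄ ∉ GraphProduct.sp g)
    (n : ℕ) (hn : 2 ≤ n) :
    ¬ ∃ x : GraphProduct Γ 𝔭,
        x ^ n = g * (GraphProduct.of a)⁻¹ * (GraphProduct.of b₁)⁻¹ * GraphProduct.of b₂ *
          GraphProduct.of a * (GraphProduct.of b₃)⁻¹ * GraphProduct.of b₄ := by
  classical
  rintro ⟨x, hx⟩
  simp only [List.nodup_cons, List.mem_cons, List.not_mem_nil, or_false, not_or] at hdist
  obtain ⟨⟨hab₁, hab₂, hab₃, hab₄⟩, ⟨h₁₂, h₁₃, h₁₄⟩, ⟨h₂₃, h₂₄⟩, h₃₄, -⟩ := hdist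
  obtain ⟨-, hadj₂, -, hadj₄⟩ := hadj
  have hne (v : V) : 𝔭 v ≠ 1 := fun h => by
    rcases h𝔭 v with h' | h'
    · omega
    · exact h'.ne_one h
  have : Nontrivial (ZMod (𝔭 a)) := ZMod.nontrivial_iff.2 (hne a)
  have : Nontrivial (ZMod (𝔭 b₂)) := ZMod.nontrivial_iff.2 (hne b₂)
  have : Nontrivial (ZMod (𝔭 b₄)) := ZMod.nontrivial_iff.2 (hne b₄)
  let K := Multiplicative (ZMod (𝔭 a) × ZMod (𝔭 b₂) × ZMod (𝔭 b₄))
  let α : K := .ofAdd (1, 0, 0)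
  let β : K := .ofAdd (0, 1, 0)
  let γ : K := .ofAdd (0, 0, 1)
  have hα : α ≠ 1 := by simp [α, K, ← ofAdd_zero, Prod.ext_iff]
  have hβ : β ≠ 1 := by simp [β, K, ← ofAdd_zero, Prod.ext_iff]
  have hγ : γ ≠ 1 := by simp [γ, K, ← ofAdd_zero, Prod.ext_iff]
  have hβγ : β ≠ γ := by simp [β, γ, K, Prod.ext_iff]
  have hγβ : γ * β ≠ 1 := by simp [β, γ, K, ← ofAdd_zero, ← ofAdd_add, Prod.ext_iff]
  have hαp : α ^ 𝔭 a = 1 := by simp [α, K, ← ofAdd_zero, ← ofAdd_nsmul, Prod.ext_iff]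
  have hβp : β ^ 𝔭 b₂ = 1 := by simp [β, K, ← ofAdd_zero, ← ofAdd_nsmul, Prod.ext_iff]
  have hγp : γ ^ 𝔭 b₄ = 1 := by simp [γ, K, ← ofAdd_zero, ← ofAdd_nsmul, Prod.ext_iff]
  let ιt : K →* Monoid.CoprodI (fun _ : Bool => K) :=
    Monoid.CoprodI.of (M := fun _ : Bool => K) (i := true)
  let ιf : K →* Monoid.CoprodI (fun _ : Bool => K) :=
    Monoid.CoprodI.of (M := fun _ : Bool => K) (i := false)
  let f : V → Monoid.CoprodI (fun _ : Bool => K) := fun v =>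
    if v = a then ιt α else if v = b₂ then ιf β else if v = b₄ then ιf γ else 1
  have hfa : f a = ιt α := by simp [f]
  have hf₂ : f b₂ = ιf β := by simp [f, Ne.symm hab₂]
  have hf₄ : f b₄ = ιf γ := by simp [f, Ne.symm hab₄, Ne.symm h₂₄]
  have hf₁ : f b₁ = 1 := by simp [f, Ne.symm hab₁, h₁₂, h₁₄]
  have hf₃ : f b₃ = 1 := by simp [f, Ne.symm hab₃, Ne.symm h₂₃, h₃₄]
  have hf (v : V) (h₂ : v ≠ b₂) (h₄ : v ≠ b₄) : f v ∈ Subgroup.zpowers (ιt α) := by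
    by_cases hv : v = a
    · simp [hv, hfa]
    · simp [f, hv, h₂, h₄, one_mem]
  have hpow (v : V) : f v ^ 𝔭 v = 1 := by
    simp only [f]
    split_ifs with h h h
    · rw [h, ← map_pow, hαp, map_one]
    · rw [h, ← map_pow, hβp, map_one]
    · rw [h, ← map_pow, hγp, map_one]
    · exact one_pow _
  have hcomm (v w : V) (h : Γ.Adj v w) : Commute (f v) (f w) := by
    have hff (p q : K) : Commute (ιf p) (ιf q) := (Commute.all p q).map ιf
    have h' := h.symm
    simp only [f]
    split_ifs <;> subst_vars <;> first
      | exact Commute.refl _ | exact hff _ _ | exact Commute.one_left _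
      | exact Commute.one_right _ | contradiction
  let φ := GraphProduct.lift f hpow hcomm
  obtain ⟨k, hk⟩ := Subgroup.mem_zpowers_iff.1 <|
    GraphProduct.map_mem_of_notMem_sp φ (Subgroup.zpowers (ιt α))
      (fun v h₂ h₄ => by simpa [φ] using hf v h₂ h₄) hsp.2.1 hsp.2.2.2
  have hφ : φ x ^ n = ιt (α ^ k * α⁻¹) * ιf β * ιt α * ιf γ := by
    rw [← map_pow, hx]
    simp [φ, hfa, hf₁, hf₂, hf₃, hf₄] at hk ⊢
    simp [hk]
  by_cases hu : α ^ k * α⁻¹ = 1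
  · refine Monoid.CoprodI.pow_ne_of_mul_of (G := fun _ : Bool => K) (i := true) (j := false)
      (by simp) hα hγβ hn ((ιf β)⁻¹ * φ x * (ιf β)⁻¹⁻¹) ?_
    rw [conj_pow, hφ, hu]
    change _ = ιt α * ιf (γ * β)
    simp [mul_assoc]
  · exact Monoid.CoprodI.pow_ne_of_mul_of_mul_of_mul_of (G := fun _ : Bool => K) (i := true)
      (j := false) (by simp) hu hβ hα hγ hβγ hn (φ x) hφ
end

section
/- In the graph product of cyclic groups G(Γ, 𝔭), if the word a₁^{α₁}⋯a_k^{α_k} (with consecutive letters distinct and each α_i a nonzero integer not annihilating a_i) spells an element g and is not reduced, then there exist 1 ≤ p < q ≤ k such that a_p = a_q and a_p is adjacent in Γ to each of the vertices a_{p+1}, a_{p+2}, …, a_{q−1}. -/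
/-- A word in the alphabet `V`: a list of syllables `(vertex, exponent)` with consecutive
vertices distinct and each exponent a nonzero integer not annihilating its vertex. -/
def IsWord {V : Type} (Γ : SimpleGraph V) (𝔭 : V → ℕ) (l : List (V × ℤ)) : Prop :=
  l.Chain' (fun s s' => s.1 ≠ s'.1) ∧
    ∀ s ∈ l, s.2 ≠ 0 ∧ (𝔭 s.1 ≠ 0 → ¬ ((𝔭 s.1 : ℤ) ∣ s.2))

/-- The element of the graph product spelled by a word. -/
def spells {V : Type} (Γ : SimpleGraph V) (𝔭 : V → ℕ) (l : List (V × ℤ)) :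
    GraphProduct Γ 𝔭 :=
  (l.map fun s => GraphProduct.of s.1 ^ s.2).prod

namespace GraphProduct

section Syllables

variable {V : Type} (Γ : SimpleGraph V) {M : V → Type}

open Classical in
/-- What remains of a list after deleting the `v`-syllable that can be shuffled to the front. -/
noncomputable def removeSyllable (v : V) : List (Σ v, M v) → List (Σ v, M v)
  | [] => []
  | ⟨w, y⟩ :: l =>
    if w = v then l else if Γ.Adj v w then ⟨w, y⟩ :: removeSyllable v l else ⟨w, y⟩ :: l

/-- Two lists are related if one is obtained from the other by swapping adjacent vertices. -/
inductive Shuffle : List (Σ v, M v) → List (Σ v, M v) → Prop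
  | nil : Shuffle [] []
  | cons (s : Σ v, M v) {l l' : List (Σ v, M v)} : Shuffle l l' → Shuffle (s :: l) (s :: l')
  | swap (s t : Σ v, M v) (l : List (Σ v, M v)) :
      Γ.Adj s.1 t.1 → Shuffle (s :: t :: l) (t :: s :: l)
  | trans {l₁ l₂ l₃ : List (Σ v, M v)} : Shuffle l₁ l₂ → Shuffle l₂ l₃ → Shuffle l₁ l₃

variable {Γ} {v w : V}

lemma eq_or_adj_or_not_adj (Γ : SimpleGraph V) (v w : V) :
    w = v ∨ Γ.Adj v w ∨ (w ≠ v ∧ ¬ Γ.Adj v w) := by tauto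

@[simp] lemma removeSyllable_nil : removeSyllable Γ v ([] : List (Σ v, M v)) = [] := rfl

@[simp] lemma removeSyllable_cons_self (y : M v) (l : List (Σ v, M v)) :
    removeSyllable Γ v (⟨v, y⟩ :: l) = l := by simp [removeSyllable]

lemma removeSyllable_cons_of_adj (h : Γ.Adj v w) (y : M w) (l : List (Σ v, M v)) :
    removeSyllable Γ v (⟨w, y⟩ :: l) = ⟨w, y⟩ :: removeSyllable Γ v l := by
  simp [removeSyllable, h, h.ne']

lemma removeSyllable_cons_of_not_adj (hne : w ≠ v) (h : ¬ Γ.Adj v w) (y : M w)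
    (l : List (Σ v, M v)) : removeSyllable Γ v (⟨w, y⟩ :: l) = ⟨w, y⟩ :: l := by
  simp [removeSyllable, h, hne]

namespace Shuffle

lemma refl (l : List (Σ v, M v)) : Shuffle Γ l l := by
  induction l with
  | nil => exact .nil
  | cons s l ih => exact .cons s ih

lemma symm {l l' : List (Σ v, M v)} (h : Shuffle Γ l l') : Shuffle Γ l' l := by
  induction h with
  | nil => exact .nil
  | cons s _ ih => exact .cons s ih
  | swap s t l h => exact .swap t s l h.symm
  | trans _ _ ih₁ ih₂ => exact ih₂.trans ih₁

lemma length_eq {l l' : List (Σ v, M v)} (h : Shuffle Γ l l') : l.length = l'.length := by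
  induction h with
  | nil => rfl
  | cons s _ ih => simp [ih]
  | swap s t l h => rfl
  | trans _ _ ih₁ ih₂ => exact ih₁.trans ih₂

lemma removeSyllable {l l' : List (Σ v, M v)} (h : Shuffle Γ l l') (v : V) :
    Shuffle Γ (removeSyllable Γ v l) (removeSyllable Γ v l') := by
  induction h with
  | nil => exact .nil
  | cons s hl ih =>
    obtain ⟨a, s⟩ := s
    rcases eq_or_adj_or_not_adj Γ v a with rfl | h | ⟨h, h'⟩
    · simpa
    · simpa only [removeSyllable_cons_of_adj h] using ih.cons _
    · simpa only [removeSyllable_cons_of_not_adj h h'] using hl.cons _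
  | swap s t l hst =>
    have hsw := Shuffle.swap s t l hst
    obtain ⟨a, s⟩ := s
    obtain ⟨b, t⟩ := t
    replace hst : Γ.Adj a b := hst
    rcases eq_or_adj_or_not_adj Γ v a with rfl | h | ⟨h, h'⟩
    · simpa [removeSyllable_cons_of_adj hst] using refl _
    · rcases eq_or_adj_or_not_adj Γ v b with rfl | k | ⟨k, k'⟩
      · simpa [removeSyllable_cons_of_adj h] using refl _
      · simpa only [removeSyllable_cons_of_adj h, removeSyllable_cons_of_adj k] using
          Shuffle.swap _ _ _ hst
      · simpa only [removeSyllable_cons_of_adj h, removeSyllable_cons_of_not_adj k k'] using hsw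
    · rcases eq_or_adj_or_not_adj Γ v b with rfl | k | ⟨k, k'⟩
      · exact absurd hst.symm h'
      · simpa only [removeSyllable_cons_of_adj k, removeSyllable_cons_of_not_adj h h'] using hsw
      · simpa only [removeSyllable_cons_of_not_adj h h', removeSyllable_cons_of_not_adj k k']
          using hsw
  | trans _ _ ih₁ ih₂ => exact ih₁.trans ih₂

end Shuffle

lemma removeSyllable_comm_of_adj (h : Γ.Adj v w) (l : List (Σ v, M v)) :
    removeSyllable Γ v (removeSyllable Γ w l) = removeSyllable Γ w (removeSyllable Γ v l) := by
  induction l with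
  | nil => rfl
  | cons s l ih =>
    obtain ⟨a, s⟩ := s
    rcases eq_or_adj_or_not_adj Γ w a with rfl | k | ⟨k, k'⟩
    · simp [removeSyllable_cons_of_adj h]
    · rw [removeSyllable_cons_of_adj k]
      rcases eq_or_adj_or_not_adj Γ v a with rfl | j | ⟨j, j'⟩
      · simp
      · simp only [removeSyllable_cons_of_adj j, removeSyllable_cons_of_adj k, ih]
      · simp only [removeSyllable_cons_of_not_adj j j', removeSyllable_cons_of_adj k]
    · rw [removeSyllable_cons_of_not_adj k k']
      rcases eq_or_adj_or_not_adj Γ v a with rfl | j | ⟨j, j'⟩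
      · exact absurd h.symm k'
      · simp only [removeSyllable_cons_of_adj j, removeSyllable_cons_of_not_adj k k']
      · simp only [removeSyllable_cons_of_not_adj j j', removeSyllable_cons_of_not_adj k k']

variable (Γ) [∀ v, Group (M v)]

open Classical in
/-- The `v`-syllable that can be shuffled to the front of a list of syllables, or `1` if there is
none. -/
noncomputable def headSyllable (v : V) : List (Σ v, M v) → M v
  | [] => 1
  | ⟨w, y⟩ :: l => if h : w = v then h ▸ y else if Γ.Adj v w then headSyllable v l else 1

open Classical in
/-- Prepend a syllable unless it is trivial. -/
noncomputable def consSyllable (v : V) (z : M v) (l : List (Σ v, M v)) : List (Σ v, M v) :=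
  if z = 1 then l else ⟨v, z⟩ :: l

/-- No syllable is trivial and no two syllables can be merged after shuffling. -/
def Irred : List (Σ v, M v) → Prop
  | [] => True
  | ⟨w, y⟩ :: l => y ≠ 1 ∧ headSyllable Γ w l = 1 ∧ Irred l

/-- Left multiplication by a syllable, on lists of syllables. -/
noncomputable def mulSyllable (v : V) (x : M v) (l : List (Σ v, M v)) : List (Σ v, M v) :=
  consSyllable v (x * headSyllable Γ v l) (removeSyllable Γ v l)

variable {Γ}

@[simp] lemma headSyllable_nil : headSyllable Γ v ([] : List (Σ v, M v)) = 1 := rfl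

@[simp] lemma headSyllable_cons_self (y : M v) (l : List (Σ v, M v)) :
    headSyllable Γ v (⟨v, y⟩ :: l) = y := by simp [headSyllable]

lemma headSyllable_cons_of_adj (h : Γ.Adj v w) (y : M w) (l : List (Σ v, M v)) :
    headSyllable Γ v (⟨w, y⟩ :: l) = headSyllable Γ v l := by
  simp [headSyllable, h, h.ne']

lemma headSyllable_cons_of_not_adj (hne : w ≠ v) (h : ¬ Γ.Adj v w) (y : M w)
    (l : List (Σ v, M v)) : headSyllable Γ v (⟨w, y⟩ :: l) = 1 := by
  simp [headSyllable, h, hne]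

@[simp] lemma consSyllable_one (l : List (Σ v, M v)) : consSyllable v 1 l = l := by
  simp [consSyllable]

lemma consSyllable_of_ne_one {z : M v} (hz : z ≠ 1) (l : List (Σ v, M v)) :
    consSyllable v z l = ⟨v, z⟩ :: l := by
  simp [consSyllable, hz]

namespace Shuffle

lemma headSyllable_eq {l l' : List (Σ v, M v)} (h : Shuffle Γ l l') (v : V) :
    headSyllable Γ v l = headSyllable Γ v l' := by
  induction h with
  | nil => rfl
  | cons s _ ih =>
    obtain ⟨a, s⟩ := s
    rcases eq_or_adj_or_not_adj Γ v a with rfl | h | ⟨h, h'⟩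
    · simp
    · simpa only [headSyllable_cons_of_adj h]
    · simp only [headSyllable_cons_of_not_adj h h']
  | swap s t l hst =>
    obtain ⟨a, s⟩ := s
    obtain ⟨b, t⟩ := t
    replace hst : Γ.Adj a b := hst
    rcases eq_or_adj_or_not_adj Γ v a with rfl | h | ⟨h, h'⟩
    · simp [headSyllable_cons_of_adj hst]
    · rcases eq_or_adj_or_not_adj Γ v b with rfl | k | ⟨k, k'⟩
      · simp [headSyllable_cons_of_adj h]
      · simp only [headSyllable_cons_of_adj h, headSyllable_cons_of_adj k]
      · simp only [headSyllable_cons_of_adj h, headSyllable_cons_of_not_adj k k']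
    · rcases eq_or_adj_or_not_adj Γ v b with rfl | k | ⟨k, k'⟩
      · exact absurd hst.symm h'
      · simp only [headSyllable_cons_of_adj k, headSyllable_cons_of_not_adj h h']
      · simp only [headSyllable_cons_of_not_adj h h', headSyllable_cons_of_not_adj k k']
  | trans _ _ ih₁ ih₂ => exact ih₁.trans ih₂

lemma consSyllable {l l' : List (Σ v, M v)} (h : Shuffle Γ l l') (v : V) (z : M v) :
    Shuffle Γ (consSyllable v z l) (consSyllable v z l') := by
  by_cases hz : z = 1
  · simpa [hz]
  · simpa only [consSyllable_of_ne_one hz] using h.cons _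

lemma mulSyllable {l l' : List (Σ v, M v)} (h : Shuffle Γ l l') (v : V) (x : M v) :
    Shuffle Γ (mulSyllable Γ v x l) (mulSyllable Γ v x l') := by
  unfold GraphProduct.mulSyllable
  rw [h.headSyllable_eq]
  exact (h.removeSyllable v).consSyllable v _

end Shuffle

lemma length_mulSyllable_le (x : M v) (l : List (Σ v, M v)) :
    (mulSyllable Γ v x l).length ≤ l.length + 1 := by
  have hrem : (removeSyllable Γ v l).length ≤ l.length := by
    induction l with
    | nil => simp
    | cons s l ih =>
      unfold removeSyllable
      split_ifs <;> simp [ih]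
  unfold mulSyllable consSyllable
  split_ifs <;> simp <;> omega

lemma headSyllable_removeSyllable_of_adj (h : Γ.Adj v w) (l : List (Σ v, M v)) :
    headSyllable Γ v (removeSyllable Γ w l) = headSyllable Γ v l := by
  induction l with
  | nil => rfl
  | cons s l ih =>
    obtain ⟨a, s⟩ := s
    rcases eq_or_adj_or_not_adj Γ w a with rfl | k | ⟨k, k'⟩
    · simp [headSyllable_cons_of_adj h]
    · rw [removeSyllable_cons_of_adj k]
      rcases eq_or_adj_or_not_adj Γ v a with rfl | j | ⟨j, j'⟩
      · simp
      · simpa only [headSyllable_cons_of_adj j]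
      · simp only [headSyllable_cons_of_not_adj j j']
    · rw [removeSyllable_cons_of_not_adj k k']

lemma headSyllable_consSyllable_of_adj (h : Γ.Adj v w) (z : M w) (l : List (Σ v, M v)) :
    headSyllable Γ v (consSyllable w z l) = headSyllable Γ v l := by
  unfold consSyllable
  split_ifs
  · rfl
  · exact headSyllable_cons_of_adj h z l

lemma removeSyllable_consSyllable_of_adj (h : Γ.Adj v w) (z : M w) (l : List (Σ v, M v)) :
    removeSyllable Γ v (consSyllable w z l) = consSyllable w z (removeSyllable Γ v l) := by
  unfold consSyllable
  split_ifs
  · rfl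
  · exact removeSyllable_cons_of_adj h z l

lemma shuffle_mulSyllable_comm (h : Γ.Adj v w) (x : M v) (y : M w) (l : List (Σ v, M v)) :
    Shuffle Γ (mulSyllable Γ v x (mulSyllable Γ w y l))
      (mulSyllable Γ w y (mulSyllable Γ v x l)) := by
  simp only [mulSyllable, headSyllable_consSyllable_of_adj h,
    headSyllable_consSyllable_of_adj h.symm, removeSyllable_consSyllable_of_adj h,
    removeSyllable_consSyllable_of_adj h.symm, headSyllable_removeSyllable_of_adj h,
    headSyllable_removeSyllable_of_adj h.symm, removeSyllable_comm_of_adj h]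
  unfold consSyllable
  split_ifs
  · exact .refl _
  · exact .refl _
  · exact .refl _
  · exact .swap _ _ _ h

lemma removeSyllable_eq_self {l : List (Σ v, M v)} (hl : Irred Γ l)
    (h : headSyllable Γ v l = 1) : removeSyllable Γ v l = l := by
  induction l with
  | nil => rfl
  | cons s l ih =>
    obtain ⟨a, s⟩ := s
    obtain ⟨hs, -, hl⟩ := hl
    rcases eq_or_adj_or_not_adj Γ v a with rfl | k | ⟨k, k'⟩
    · exact absurd (by simpa using h) hs
    · rw [removeSyllable_cons_of_adj k, ih hl (by rwa [headSyllable_cons_of_adj k] at h)]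
    · exact removeSyllable_cons_of_not_adj k k' _ _

lemma headSyllable_removeSyllable_self {l : List (Σ v, M v)} (hl : Irred Γ l) (v : V) :
    headSyllable Γ v (removeSyllable Γ v l) = 1 := by
  induction l with
  | nil => rfl
  | cons s l ih =>
    obtain ⟨a, s⟩ := s
    obtain ⟨-, hh, hl⟩ := hl
    rcases eq_or_adj_or_not_adj Γ v a with rfl | k | ⟨k, k'⟩
    · simpa
    · rw [removeSyllable_cons_of_adj k, headSyllable_cons_of_adj k, ih hl]
    · rw [removeSyllable_cons_of_not_adj k k', headSyllable_cons_of_not_adj k k']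

namespace Irred

lemma removeSyllable {l : List (Σ v, M v)} (hl : Irred Γ l) (v : V) :
    Irred Γ (removeSyllable Γ v l) := by
  induction l with
  | nil => trivial
  | cons s l ih =>
    obtain ⟨a, s⟩ := s
    have hsl := hl
    obtain ⟨hs, hh, hl⟩ := hl
    rcases eq_or_adj_or_not_adj Γ v a with rfl | k | ⟨k, k'⟩
    · simpa
    · rw [removeSyllable_cons_of_adj k]
      exact ⟨hs, by rwa [headSyllable_removeSyllable_of_adj k.symm], ih hl⟩
    · rwa [removeSyllable_cons_of_not_adj k k']

lemma mulSyllable {l : List (Σ v, M v)} (hl : Irred Γ l) (v : V) (x : M v) :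
    Irred Γ (mulSyllable Γ v x l) := by
  unfold GraphProduct.mulSyllable consSyllable
  split_ifs with h
  · exact hl.removeSyllable v
  · exact ⟨h, headSyllable_removeSyllable_self hl v, hl.removeSyllable v⟩

end Irred

lemma shuffle_consSyllable_headSyllable {l : List (Σ v, M v)} (hl : Irred Γ l) (v : V) :
    Shuffle Γ (consSyllable v (headSyllable Γ v l) (removeSyllable Γ v l)) l := by
  induction l with
  | nil => simpa using .nil
  | cons s l ih =>
    obtain ⟨a, s⟩ := s
    obtain ⟨hs, hh, hl⟩ := hl
    rcases eq_or_adj_or_not_adj Γ v a with rfl | k | ⟨k, k'⟩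
    · simpa [consSyllable_of_ne_one hs] using .refl _
    · rw [removeSyllable_cons_of_adj k, headSyllable_cons_of_adj k]
      refine .trans ?_ ((ih hl).cons _)
      unfold consSyllable
      split_ifs
      · exact .refl _
      · exact .swap _ _ _ k
    · simpa [removeSyllable_cons_of_not_adj k k', headSyllable_cons_of_not_adj k k'] using .refl _

lemma mulSyllable_mul {l : List (Σ v, M v)} (hl : Irred Γ l) (x y : M v) :
    mulSyllable Γ v (x * y) l = mulSyllable Γ v x (mulSyllable Γ v y l) := by
  have hhead := headSyllable_removeSyllable_self hl v
  have hrem := removeSyllable_eq_self (hl.removeSyllable v) hhead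
  unfold mulSyllable
  by_cases hz : y * headSyllable Γ v l = 1
  · rw [hz, consSyllable_one, hhead, hrem, mul_assoc, hz]
  · rw [consSyllable_of_ne_one hz, headSyllable_cons_self, removeSyllable_cons_self, mul_assoc]

lemma mulSyllable_of_irred {x : M v} {l : List (Σ v, M v)} (hl : Irred Γ (⟨v, x⟩ :: l)) :
    mulSyllable Γ v x l = ⟨v, x⟩ :: l := by
  obtain ⟨hx, hh, hl⟩ := hl
  rw [mulSyllable, hh, removeSyllable_eq_self hl hh, mul_one, consSyllable_of_ne_one hx]

variable (Γ M) in
/-- Irreducible lists of syllables up to shuffling. -/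
def shuffleSetoid : Setoid {l : List (Σ v, M v) // Irred Γ l} where
  r l l' := Shuffle Γ l.1 l'.1
  iseqv := ⟨fun l => .refl l.1, Shuffle.symm, Shuffle.trans⟩

variable (Γ M) in
/-- Normal forms of elements of a graph product. -/
abbrev NormalForm : Type := Quotient (shuffleSetoid Γ M)

namespace NormalForm

variable (Γ M) in
/-- The normal form without syllables. -/
def nil : NormalForm Γ M := Quotient.mk _ ⟨[], trivial⟩

/-- The number of syllables of a normal form. -/
def length : NormalForm Γ M → ℕ :=
  Quotient.lift (fun l => l.1.length) fun _ _ h => Shuffle.length_eq h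

/-- Left multiplication by a syllable, on normal forms. -/
noncomputable def smul (v : V) (x : M v) : NormalForm Γ M → NormalForm Γ M :=
  Quotient.map (fun l => ⟨mulSyllable Γ v x l.1, l.2.mulSyllable v x⟩)
    fun _ _ h => Shuffle.mulSyllable h v x

lemma smul_mk (x : M v) (l : {l : List (Σ v, M v) // Irred Γ l}) :
    smul v x (Quotient.mk (shuffleSetoid Γ M) l) =
      Quotient.mk _ ⟨mulSyllable Γ v x l.1, l.2.mulSyllable v x⟩ := rfl

lemma length_smul_le (x : M v) (n : NormalForm Γ M) : (smul v x n).length ≤ n.length + 1 := by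
  induction n using Quotient.inductionOn with
  | h l => exact length_mulSyllable_le x l.1

lemma smul_comm (h : Γ.Adj v w) (x : M v) (y : M w) (n : NormalForm Γ M) :
    smul v x (smul w y n) = smul w y (smul v x n) := by
  induction n using Quotient.inductionOn with
  | h l => exact Quotient.sound (shuffle_mulSyllable_comm h x y l.1)

variable (Γ M) in
/-- The action of a vertex group on normal forms. -/
noncomputable def vertexAction (v : V) : M v →* Equiv.Perm (NormalForm Γ M) :=
  MonoidHom.toHomPerm
    { toFun := fun x => (smul v x : NormalForm Γ M → NormalForm Γ M)
      map_one' := by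
        funext n
        induction n using Quotient.inductionOn with
        | h l =>
          refine Quotient.sound ?_
          change Shuffle Γ (mulSyllable Γ v 1 l.1) l.1
          rw [mulSyllable, one_mul]
          exact shuffle_consSyllable_headSyllable l.2 v
      map_mul' := fun x y => by
        funext n
        induction n using Quotient.inductionOn with
        | h l => exact congrArg (Quotient.mk _) (Subtype.ext (mulSyllable_mul l.2 x y)) }

lemma vertexAction_apply (x : M v) (n : NormalForm Γ M) : vertexAction Γ M v x n = smul v x n :=
  rfl

end NormalForm

end Syllables

section Words

variable {V : Type} (Γ : SimpleGraph V) (𝔭 : V → ℕ)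

/-- The vertex groups of a graph product of cyclic groups. -/
abbrev VertexGroup (v : V) : Type := Multiplicative (ZMod (𝔭 v))

/-- The action of a graph product of cyclic groups on normal forms. -/
noncomputable def action :
    GraphProduct Γ 𝔭 →* Equiv.Perm (NormalForm Γ (VertexGroup 𝔭)) :=
  PresentedGroup.toGroup
    (f := fun v => NormalForm.vertexAction Γ (VertexGroup 𝔭) v (Multiplicative.ofAdd 1)) <| by
    rintro r (⟨v, -, rfl⟩ | ⟨a, b, hab, rfl⟩)
    · rw [map_pow, FreeGroup.lift_apply_of, ← map_pow, ← ofAdd_nsmul, nsmul_one,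
        ZMod.natCast_self, ofAdd_zero, map_one]
    · simp only [map_mul, map_inv, FreeGroup.lift_apply_of]
      rw [mul_inv_eq_one, mul_inv_eq_iff_eq_mul]
      ext1 n
      exact NormalForm.smul_comm hab _ _ n

/-- A syllable with integer exponent, viewed in its vertex group. -/
def toSyllable (s : V × ℤ) : Σ v, VertexGroup 𝔭 v :=
  ⟨s.1, Multiplicative.ofAdd (s.2 : ZMod (𝔭 s.1))⟩

lemma action_of_zpow (v : V) (n : ℤ) (x : NormalForm Γ (VertexGroup 𝔭)) :
    action Γ 𝔭 (GraphProduct.of v ^ n) x =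
      NormalForm.smul v (Multiplicative.ofAdd (n : ZMod (𝔭 v))) x := by
  have h : action Γ 𝔭 (GraphProduct.of v) =
      NormalForm.vertexAction Γ (VertexGroup 𝔭) v (Multiplicative.ofAdd 1) :=
    PresentedGroup.toGroup.of _
  rw [map_zpow, h, ← map_zpow, ← ofAdd_zsmul, zsmul_one, NormalForm.vertexAction_apply]

lemma spells_cons (s : V × ℤ) (l : List (V × ℤ)) :
    spells Γ 𝔭 (s :: l) = GraphProduct.of s.1 ^ s.2 * spells Γ 𝔭 l := by
  simp [spells]

lemma length_action_spells_le (l : List (V × ℤ)) :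
    (action Γ 𝔭 (spells Γ 𝔭 l) (NormalForm.nil _ _)).length ≤ l.length := by
  induction l with
  | nil => simp [spells, NormalForm.nil, NormalForm.length]
  | cons s l ih =>
    rw [spells_cons, map_mul, Equiv.Perm.mul_apply, action_of_zpow]
    exact (NormalForm.length_smul_le _ _).trans (Nat.succ_le_succ ih)

lemma action_spells_of_irred (l : List (V × ℤ)) (hl : Irred Γ (l.map (toSyllable 𝔭))) :
    action Γ 𝔭 (spells Γ 𝔭 l) (NormalForm.nil _ _) = Quotient.mk _ ⟨_, hl⟩ := by
  induction l with
  | nil => simp [spells, NormalForm.nil]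
  | cons s l ih =>
    rw [spells_cons, map_mul, Equiv.Perm.mul_apply, action_of_zpow, ih hl.2.2,
      NormalForm.smul_mk]
    exact congrArg (Quotient.mk _) (Subtype.ext (mulSyllable_of_irred hl))

variable {Γ 𝔭}

lemma exists_get_of_headSyllable_ne_one {v : V} {l : List (V × ℤ)}
    (h : headSyllable Γ v (l.map (toSyllable 𝔭)) ≠ 1) :
    ∃ q : Fin l.length, v = (l.get q).1 ∧ ∀ r : Fin l.length, r < q → Γ.Adj v (l.get r).1 := by
  induction l with
  | nil => simp at h
  | cons s l ih =>
    rw [List.map_cons] at h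
    rcases eq_or_adj_or_not_adj Γ v s.1 with rfl | k | ⟨k, k'⟩
    · exact ⟨⟨0, by simp⟩, rfl, fun r hr => absurd hr (Nat.not_lt_zero _)⟩
    · rw [toSyllable, headSyllable_cons_of_adj k] at h
      obtain ⟨q, hq, hr⟩ := ih h
      refine ⟨q.succ, hq, fun r => ?_⟩
      refine Fin.cases (fun _ => k) (fun r hrq => ?_) r
      exact hr r (Fin.succ_lt_succ_iff.1 hrq)
    · exact absurd (headSyllable_cons_of_not_adj k k' _ _) h

lemma exists_get_of_not_irred {l : List (V × ℤ)}
    (hne : ∀ s ∈ l, (toSyllable 𝔭 s).2 ≠ 1) (hl : ¬ Irred Γ (l.map (toSyllable 𝔭))) :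
    ∃ p q : Fin l.length, p < q ∧ (l.get p).1 = (l.get q).1 ∧
      ∀ r : Fin l.length, p < r → r < q → Γ.Adj (l.get p).1 (l.get r).1 := by
  induction l with
  | nil => exact absurd trivial hl
  | cons s l ih =>
    by_cases hl' : Irred Γ (l.map (toSyllable 𝔭))
    · have hh : headSyllable Γ s.1 (l.map (toSyllable 𝔭)) ≠ 1 := fun h =>
        hl ⟨hne s (by simp), h, hl'⟩
      obtain ⟨q, hq, hr⟩ := exists_get_of_headSyllable_ne_one hh
      refine ⟨⟨0, by simp⟩, q.succ, Fin.succ_pos q, hq, fun r => ?_⟩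
      refine Fin.cases (fun h => absurd h (lt_irrefl _)) (fun r _ hrq => ?_) r
      exact hr r (Fin.succ_lt_succ_iff.1 hrq)
    · obtain ⟨p, q, hpq, heq, hr⟩ := ih (fun t ht => hne t (by simp [ht])) hl'
      refine ⟨p.succ, q.succ, Fin.succ_lt_succ_iff.2 hpq, heq, fun r => ?_⟩
      refine Fin.cases (fun h => absurd h (Nat.not_lt_zero _)) (fun r hpr hrq => ?_) r
      exact hr r (Fin.succ_lt_succ_iff.1 hpr) (Fin.succ_lt_succ_iff.1 hrq)

lemma toSyllable_ne_one_of_isWord {l : List (V × ℤ)} (hl : IsWord Γ 𝔭 l) :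
    ∀ s ∈ l, (toSyllable 𝔭 s).2 ≠ 1 := by
  intro s hs h
  obtain ⟨hs₀, hsp⟩ := hl.2 s hs
  have hdvd : (𝔭 s.1 : ℤ) ∣ s.2 := (ZMod.intCast_zmod_eq_zero_iff_dvd _ _).1 h
  by_cases hp : 𝔭 s.1 = 0
  · rw [hp, Nat.cast_zero, zero_dvd_iff] at hdvd
    exact hs₀ hdvd
  · exact hsp hp hdvd

end Words

end GraphProduct

theorem stmt_17 {V : Type} (Γ : SimpleGraph V) (𝔭 : V → ℕ)
    (h𝔭 : ∀ v, 𝔭 v = 0 ∨ IsPrimePow (𝔭 v))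
    (l : List (V × ℤ)) (hl : IsWord Γ 𝔭 l) (g : GraphProduct Γ 𝔭)
    (hg : spells Γ 𝔭 l = g)
    (hnotreduced : ∃ l' : List (V × ℤ),
      IsWord Γ 𝔭 l' ∧ spells Γ 𝔭 l' = g ∧ l'.length < l.length) :
    ∃ p q : Fin l.length, p < q ∧ (l.get p).1 = (l.get q).1 ∧
      ∀ r : Fin l.length, p < r → r < q → Γ.Adj (l.get p).1 (l.get r).1 := by
  refine GraphProduct.exists_get_of_not_irred (GraphProduct.toSyllable_ne_one_of_isWord hl) ?_
  intro hirred
  obtain ⟨l', -, hl', hlt⟩ := hnotreduced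
  have hle := GraphProduct.length_action_spells_le Γ 𝔭 l'
  rw [hl', ← hg, GraphProduct.action_spells_of_irred Γ 𝔭 l hirred] at hle
  have hlen : (l.map (GraphProduct.toSyllable 𝔭)).length ≤ l'.length := hle
  rw [List.length_map] at hlen
  exact absurd hlt (not_lt.2 hlen)
end
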